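/- Let n ≥ 2 and let Q ⊆ ℝⁿ be a real quadric surface. Then at least one connected component of ℝⁿ \ Q is convex if and only if there exists an affine isometry f : ℝⁿ → ℝⁿ such that f(Q) is one of the following sets, with all scalars a_i involved positive: (1) {x : a₁x₁² + ⋯ + a_k x_k² = 1} for some 1 ≤ k ≤ n; (2) {x : a₁x₁² − a₂x₂² − ⋯ − a_k x_k² = 1} for some 2 ≤ k ≤ n; (3) {x : x₁ = 0}; (4) {x : a₁x₁² − a₂x₂² − ⋯ − a_k x_k² = 0} for some 2 ≤ k ≤ n; (5) {x : a₁x₁² + ⋯ + a_{k−1} x_{k−1}² = x_k} for some 2 ≤ k ≤ n. -/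

import Mathlib

open Set Metric RealInnerProductSpace

noncomputable section

/-- Euclidean n-space. -/
abbrev En (n : ℕ) := EuclideanSpace ℝ (Fin n)

/-- A quadric surface in ℝⁿ: the zero set of a quadratic polynomial whose quadratic
part (given by a symmetric matrix) is not identically zero. -/
def IsQuadricSurface {n : ℕ} (Q : Set (En n)) : Prop :=
  ∃ (a : Matrix (Fin n) (Fin n) ℝ) (b : Fin n → ℝ) (c : ℝ),
    a.IsSymm ∧ a ≠ 0 ∧
    Q = {x : En n | (∑ i, ∑ k, a i k * x i * x k) + 2 * (∑ i, b i * x i) + c = 0}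

/-- A real quadric surface: a nonempty quadric surface. -/
def IsRealQuadricSurface {n : ℕ} (Q : Set (En n)) : Prop :=
  IsQuadricSurface Q ∧ Q.Nonempty

/-- The set of connected components of a subset `F` of a topological space. -/
def componentsIn {α : Type*} [TopologicalSpace α] (F : Set α) : Set (Set α) :=
  {C | ∃ x ∈ F, C = connectedComponentIn F x}

/-- A convex quadric: the frontier of a convex connected component of the complement
of a real quadric surface. -/
def IsConvexQuadric {n : ℕ} (S : Set (En n)) : Prop :=
  ∃ Q U : Set (En n), IsRealQuadricSurface Q ∧ U ∈ componentsIn Qᶜ ∧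
    Convex ℝ U ∧ S = frontier U

/-!
Completing the square turns the equation of `Q`, after a translation, into `⟪T x, x⟫ + c = 0` or
into `⟪T x, x⟫ + 2 * ⟪w, x⟫ = 0` with `T w = 0` and `w ≠ 0`, where `T` is symmetric. The complement
of `Q` is the disjoint union of the open sets where the polynomial is positive and negative, and by
passing to `-T` it suffices to study a convex component of the positive side.

* If `c ≤ 0`, let `x` lie in a convex component. A vector `e` with `⟪T x, e⟫ = 0` and `⟪T e, e⟫ > 0`
  would span with `x` a plane in which the level curve of the form is an ellipse joining `x` to
  `-x`, and convexity would put `0` on the positive side. Hence `T` has exactly one positive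
  eigenvalue.
* If `c > 0`, the positive side is star-shaped about `0`, hence itself convex, and eigenvalues of
  both signs would give a segment that leaves it at its midpoint.
* In the parabolic case the positive side is connected, since it lies above a graph over the
  hyperplanes transverse to `w`, and its convexity forces `T ≤ 0`.

Sorting an orthonormal eigenbasis then yields the five equations. Conversely each of the five
equations has a convex side or sheet: a sublevel set of a convex function, or one nappe
`{x | 0 < L x ∧ q x + c < L x ^ 2}` with `q` nonnegative, whose convexity is Cauchy–Schwarz.
-/

section Components

variable {α : Type*} [TopologicalSpace α] {A B : Set α}

lemma connectedComponentIn_union_of_mem_left (hA : IsOpen A) (hB : IsOpen B)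
    (hAB : Disjoint A B) {x : α} (hx : x ∈ A) :
    connectedComponentIn (A ∪ B) x = connectedComponentIn A x := by
  have hmem : x ∈ connectedComponentIn (A ∪ B) x := mem_connectedComponentIn (.inl hx)
  have hsub : connectedComponentIn (A ∪ B) x ⊆ A :=
    isPreconnected_connectedComponentIn.subset_left_of_subset_union hA hB hAB
      (connectedComponentIn_subset _ _) ⟨x, hmem, hx⟩
  exact (isPreconnected_connectedComponentIn.subset_connectedComponentIn hmem hsub).antisymm
    (connectedComponentIn_mono x subset_union_left)

lemma componentsIn_union (hA : IsOpen A) (hB : IsOpen B) (hAB : Disjoint A B) :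
    componentsIn (A ∪ B) = componentsIn A ∪ componentsIn B := by
  have hleft : ∀ x ∈ A, connectedComponentIn (A ∪ B) x = connectedComponentIn A x :=
    fun x => connectedComponentIn_union_of_mem_left hA hB hAB
  have hright : ∀ x ∈ B, connectedComponentIn (A ∪ B) x = connectedComponentIn B x := by
    intro x hx
    rw [union_comm]
    exact connectedComponentIn_union_of_mem_left hB hA hAB.symm hx
  ext C
  constructor
  · rintro ⟨x, hx | hx, rfl⟩
    · exact .inl ⟨x, hx, hleft x hx⟩
    · exact .inr ⟨x, hx, hright x hx⟩
  · rintro (⟨x, hx, rfl⟩ | ⟨x, hx, rfl⟩)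
    · exact ⟨x, .inl hx, (hleft x hx).symm⟩
    · exact ⟨x, .inr hx, (hright x hx).symm⟩

end Components

section ConvexComponent

variable {E : Type*} [AddCommGroup E] [Module ℝ E] [TopologicalSpace E]

/-- Some connected component of `F` is convex. -/
def HasConvexComponent (F : Set E) : Prop :=
  ∃ U ∈ componentsIn F, Convex ℝ U

lemma hasConvexComponent_union_iff {A B : Set E} (hA : IsOpen A) (hB : IsOpen B)
    (hAB : Disjoint A B) :
    HasConvexComponent (A ∪ B) ↔ HasConvexComponent A ∨ HasConvexComponent B := by
  simp only [HasConvexComponent, componentsIn_union hA hB hAB, mem_union, or_and_right, exists_or]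

lemma hasConvexComponent_compl_setOf_eq_zero_iff {f : E → ℝ} (hf : Continuous f) :
    HasConvexComponent {x | f x = 0}ᶜ ↔
      HasConvexComponent {x | 0 < f x} ∨ HasConvexComponent {x | f x < 0} := by
  have hdisj : Disjoint {x | 0 < f x} {x | f x < 0} :=
    disjoint_left.2 fun x hpos hneg => lt_asymm (mem_ofPred.1 hpos) hneg
  have hcompl : {x | f x = 0}ᶜ = {x | 0 < f x} ∪ {x | f x < 0} := by
    ext x
    exact ne_iff_lt_or_gt.trans or_comm
  rw [hcompl, hasConvexComponent_union_iff (isOpen_lt continuous_const hf)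
    (isOpen_lt hf continuous_const) hdisj]

lemma HasConvexComponent.nonempty {F : Set E} (h : HasConvexComponent F) : F.Nonempty := by
  obtain ⟨_, ⟨x, hx, rfl⟩, -⟩ := h
  exact ⟨x, hx⟩

lemma HasConvexComponent.convex_of_isPreconnected {F : Set E} (h : HasConvexComponent F)
    (hF : IsPreconnected F) : Convex ℝ F := by
  obtain ⟨_, ⟨x, hx, rfl⟩, hconv⟩ := h
  rwa [hF.connectedComponentIn hx] at hconv

lemma hasConvexComponent_of_convex [IsTopologicalAddGroup E] [ContinuousSMul ℝ E] {F : Set E}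
    (hF : Convex ℝ F) (hne : F.Nonempty) : HasConvexComponent F := by
  obtain ⟨x, hx⟩ := hne
  exact ⟨F, ⟨x, hx, (hF.isPreconnected.connectedComponentIn hx).symm⟩, hF⟩

end ConvexComponent

lemma HasConvexComponent.image {E E' : Type*} [NormedAddCommGroup E] [NormedSpace ℝ E]
    [NormedAddCommGroup E'] [NormedSpace ℝ E'] {F : Set E} (h : HasConvexComponent F)
    (g : E ≃ᵃⁱ[ℝ] E') : HasConvexComponent (g '' F) := by
  obtain ⟨_, ⟨x, hx, rfl⟩, hconv⟩ := h
  exact ⟨_, ⟨g x, mem_image_of_mem g hx, g.toHomeomorph.image_connectedComponentIn hx⟩,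
    hconv.affine_image g.toAffineEquiv.toAffineMap⟩

section QuadraticForm

variable {E : Type*} [AddCommGroup E] [Module ℝ E] (q : QuadraticForm ℝ E)

lemma quadraticForm_smul_add_smul (x y : E) (s t : ℝ) :
    q (s • x + t • y) = s ^ 2 * q x + t ^ 2 * q y + s * t * QuadraticMap.polar q x y := by
  simp only [QuadraticMap.map_add q, QuadraticMap.map_smul, QuadraticMap.polar_smul_left,
    QuadraticMap.polar_smul_right, smul_eq_mul]
  ring

lemma quadraticForm_add_smul_of_forall_polar_eq_zero {w : E}
    (hw : ∀ x, QuadraticMap.polar q x w = 0) (x : E) (r : ℝ) : q (x + r • w) = q x := by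
  have hqw : q w = 0 := by simpa [QuadraticMap.polar_self] using hw w
  simpa [hw, hqw] using quadraticForm_smul_add_smul q x w 1 r

variable {q}

lemma convexOn_of_quadraticForm_nonneg (hq : ∀ x, 0 ≤ q x) : ConvexOn ℝ univ q := by
  refine ⟨convex_univ, fun x _ y _ s t hs ht hst => ?_⟩
  have hdiff : q (x - y) = q x + q y - QuadraticMap.polar q x y := by
    simpa [sub_eq_add_neg] using quadraticForm_smul_add_smul q x y 1 (-1)
  have hgap : s * q x + t * q y - q (s • x + t • y) = s * t * q (x - y) := by
    rw [quadraticForm_smul_add_smul, hdiff, eq_sub_of_add_eq hst]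
    ring
  have : 0 ≤ s * t * q (x - y) := mul_nonneg (mul_nonneg hs ht) (hq _)
  simp only [smul_eq_mul]
  linarith

-- Nonnegativity of `q` at `L y • x - L x • y` replaces the Cauchy–Schwarz inequality.
lemma polar_add_lt_of_add_lt_sq (hq : ∀ x, 0 ≤ q x) (L : E →ₗ[ℝ] ℝ) {c : ℝ} (hc : 0 ≤ c)
    {x y : E} (hx : 0 < L x) (hxq : q x + c < L x ^ 2) (hy : 0 < L y)
    (hyq : q y + c < L y ^ 2) : QuadraticMap.polar q x y + 2 * c < 2 * (L x * L y) := by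
  have hnonneg := hq (L y • x + (-L x) • y)
  rw [quadraticForm_smul_add_smul] at hnonneg
  have hxy : 0 < L x * L y := mul_pos hx hy
  have hcsq : 0 ≤ c * (L x - L y) ^ 2 := mul_nonneg hc (sq_nonneg _)
  have hyx := mul_lt_mul_of_pos_left hxq (pow_pos hy 2)
  have hxy' := mul_lt_mul_of_pos_left hyq (pow_pos hx 2)
  refine lt_of_mul_lt_mul_left ?_ hxy.le
  linarith

lemma convex_setOf_pos_and_add_lt_sq (hq : ∀ x, 0 ≤ q x) (L : E →ₗ[ℝ] ℝ) {c : ℝ}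
    (hc : 0 ≤ c) : Convex ℝ {x | 0 < L x ∧ q x + c < L x ^ 2} := by
  refine convex_iff_forall_pos.2 fun x ⟨hx, hxq⟩ y ⟨hy, hyq⟩ s t hs ht hst => ?_
  have hL : L (s • x + t • y) = s * L x + t * L y := by simp
  have hpolar := polar_add_lt_of_add_lt_sq hq L hc hx hxq hy hyq
  refine ⟨by rw [hL]; positivity, ?_⟩
  calc q (s • x + t • y) + c
      = s ^ 2 * (q x + c) + t ^ 2 * (q y + c) + s * t * (QuadraticMap.polar q x y + 2 * c) := by
        rw [quadraticForm_smul_add_smul, eq_sub_of_add_eq hst]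
        ring
    _ < s ^ 2 * L x ^ 2 + t ^ 2 * L y ^ 2 + s * t * (2 * (L x * L y)) := by gcongr
    _ = L (s • x + t • y) ^ 2 := by
        rw [hL]
        ring

lemma starConvex_setOf_pos_quadraticForm_add {c : ℝ} (hc : 0 < c) :
    StarConvex ℝ 0 {x | 0 < q x + c} := by
  refine starConvex_zero_iff.2 fun x hx t ht₀ ht₁ => ?_
  have hconvex : q (t • x) + c = t ^ 2 * (q x + c) + (1 - t ^ 2) * c := by
    rw [QuadraticMap.map_smul, smul_eq_mul]
    ring
  rw [mem_ofPred] at hx ⊢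
  rw [hconvex]
  rcases ht₁.eq_or_lt with rfl | ht₁
  · simpa using hx
  · have : 0 < 1 - t ^ 2 := by nlinarith
    positivity

variable [TopologicalSpace E] [ContinuousAdd E] [ContinuousSMul ℝ E]

-- If `q e > 0`, the ellipse through `x` and a multiple of `e` is a level curve of `q` that joins
-- `x` to `-x`, and a convex component containing both would contain `0`.
lemma exists_forall_polar_eq_zero_imp_nonpos {c : ℝ} (hc : c ≤ 0)
    (h : HasConvexComponent {x | 0 < q x + c}) :
    ∃ x, ∀ e, QuadraticMap.polar q x e = 0 → q e ≤ 0 := by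
  obtain ⟨_, ⟨x, hx : 0 < q x + c, rfl⟩, hconv⟩ := h
  refine ⟨x, fun e horth => ?_⟩
  by_contra! he
  let ellipse (θ : ℝ) : E := Real.cos θ • x + (Real.sin θ * √(q x / q e)) • e
  have hlevel (θ : ℝ) : q (ellipse θ) = q x := by
    have hsqrt : √(q x / q e) ^ 2 * q e = q x := by
      rw [Real.sq_sqrt (div_nonneg (by linarith) he.le), div_mul_cancel₀ _ he.ne']
    rw [quadraticForm_smul_add_smul, horth]
    linear_combination Real.sin θ ^ 2 * hsqrt + q x * Real.sin_sq_add_cos_sq θ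
  have hsub : range ellipse ⊆ connectedComponentIn {x | 0 < q x + c} x := by
    refine (isPreconnected_range (by fun_prop)).subset_connectedComponentIn
      ⟨0, by simp [ellipse]⟩ ?_
    rintro _ ⟨θ, rfl⟩
    simpa [hlevel θ] using hx
  have hneg : -x ∈ connectedComponentIn {x | 0 < q x + c} x := hsub ⟨Real.pi, by simp [ellipse]⟩
  have hzero : (0 : E) ∈ {x | 0 < q x + c} := connectedComponentIn_subset _ _ <| by
    simpa using hconv.midpoint_mem (mem_connectedComponentIn hx) hneg
  simp only [mem_ofPred_eq, map_zero, zero_add] at hzero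
  linarith

lemma nonpos_of_polar_eq_zero_of_pos {c : ℝ} (hc : c ≤ 0)
    (h : HasConvexComponent {x | 0 < q x + c}) {v w : E}
    (hvw : QuadraticMap.polar q v w = 0) (hv : 0 < q v) : q w ≤ 0 := by
  obtain ⟨x, hx⟩ := exists_forall_polar_eq_zero_imp_nonpos hc h
  by_contra! hw
  have hxv : QuadraticMap.polar q x v ≠ 0 := fun h0 => hv.not_ge (hx v h0)
  set e := QuadraticMap.polar q x w • v + (-QuadraticMap.polar q x v) • w
  have horth : QuadraticMap.polar q x e = 0 := by
    simp only [e, QuadraticMap.polar_add_right, QuadraticMap.polar_smul_right, smul_eq_mul]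
    ring
  have hqe : q e = QuadraticMap.polar q x w ^ 2 * q v + QuadraticMap.polar q x v ^ 2 * q w := by
    rw [quadraticForm_smul_add_smul, hvw]
    ring
  have : 0 < q e := by rw [hqe]; positivity
  exact this.not_ge (hx e horth)

-- After scaling `v` so that `q v = -c`, the points `v ± w` would lie in the convex set
-- `{x | 0 < q x + c}` while their midpoint `v` does not.
lemma nonpos_of_polar_eq_zero_of_neg {c : ℝ} (hc : 0 < c)
    (h : HasConvexComponent {x | 0 < q x + c}) {v w : E}
    (hvw : QuadraticMap.polar q v w = 0) (hv : q v < 0) : q w ≤ 0 := by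
  by_contra! hw
  have hconv : Convex ℝ {x | 0 < q x + c} := h.convex_of_isPreconnected
    ((starConvex_setOf_pos_quadraticForm_add hc).isPathConnected
      (by simpa using hc)).isConnected.isPreconnected
  set r := √(c / -q v)
  have hr : r ^ 2 * q v = -c := by
    rw [Real.sq_sqrt (div_nonneg hc.le (by linarith)), div_mul_eq_mul_div, div_neg,
      mul_div_cancel_right₀ _ hv.ne]
  have hmem (t : ℝ) (ht : t ^ 2 = 1) : r • v + t • w ∈ {x | 0 < q x + c} := by
    rw [mem_ofPred, quadraticForm_smul_add_smul, hvw, hr, ht]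
    linarith
  have hmid : r • v ∈ {x | 0 < q x + c} := by
    simpa [← sub_eq_add_neg, -mem_ofPred_eq] using
      hconv.midpoint_mem (hmem 1 (by norm_num)) (hmem (-1) (by norm_num))
  rw [mem_ofPred, QuadraticMap.map_smul, smul_eq_mul, ← pow_two, hr] at hmid
  linarith

lemma isPreconnected_setOf_pos_of_map_add_smul {f : E → ℝ} (hf : Continuous f) {w : E}
    (hw : ∀ x r, f (x + r • w) = f x + r) : IsPreconnected {x | 0 < f x} := by
  have himage : {x | 0 < f x} =
      (fun p : E × ℝ => p.1 + (p.2 - f p.1) • w) '' (univ ×ˢ Ioi 0) := by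
    ext x
    constructor
    · intro hx
      exact ⟨(x, f x), ⟨mem_univ x, hx⟩, by simp⟩
    · rintro ⟨⟨y, r⟩, ⟨-, hr : 0 < r⟩, rfl⟩
      simpa [hw] using hr
  rw [himage]
  exact (isPreconnected_univ.prod isPreconnected_Ioi).image _ (by fun_prop)

-- Moving `e` along `w` makes it a zero of `L`; then `e` and `-e` lie in the convex set
-- `{x | 0 < q x + L x}`, while their midpoint `0` does not.
lemma nonpos_of_forall_polar_eq_zero (hq : Continuous q) (L : E →L[ℝ] ℝ) {w : E}
    (hw : ∀ x, QuadraticMap.polar q x w = 0) (hLw : L w = 1)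
    (h : HasConvexComponent {x | 0 < q x + L x}) (e : E) : q e ≤ 0 := by
  by_contra! he
  have hconv : Convex ℝ {x | 0 < q x + L x} := by
    refine h.convex_of_isPreconnected
      (isPreconnected_setOf_pos_of_map_add_smul (by fun_prop) (w := w) fun x r => ?_)
    rw [quadraticForm_add_smul_of_forall_polar_eq_zero q hw, map_add, map_smul, hLw,
      smul_eq_mul]
    ring
  set d := e + (-L e) • w
  have hqd : q d = q e := quadraticForm_add_smul_of_forall_polar_eq_zero q hw e _
  have hLd : L d = 0 := by simp [d, hLw]
  have hd : d ∈ {x | 0 < q x + L x} := by simpa [hqd, hLd] using he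
  have hnegd : -d ∈ {x | 0 < q x + L x} := by simpa [hqd, hLd] using he
  simpa using hconv.midpoint_mem hd hnegd

end QuadraticForm

section SymmetricOperator

variable {E : Type*} [NormedAddCommGroup E] [InnerProductSpace ℝ E] {T : E →ₗ[ℝ] E}

/-- The quadratic form `x ↦ ⟪T x, x⟫` of an operator `T`. -/
def operatorForm (T : E →ₗ[ℝ] E) : QuadraticForm ℝ E :=
  LinearMap.BilinMap.toQuadraticMap ((innerₗ E).comp T)

lemma operatorForm_apply (T : E →ₗ[ℝ] E) (x : E) : operatorForm T x = ⟪T x, x⟫ := rfl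

lemma polar_operatorForm (hT : T.IsSymmetric) (x y : E) :
    QuadraticMap.polar (operatorForm T) x y = 2 * ⟪T x, y⟫ := by
  have hsymm : ⟪T y, x⟫ = ⟪T x, y⟫ := by rw [hT y x, real_inner_comm]
  rw [operatorForm, LinearMap.BilinMap.polar_toQuadraticMap]
  simp only [LinearMap.comp_apply, innerₗ_apply_apply, hsymm]
  ring

lemma isSymmetric_neg (hT : T.IsSymmetric) : (-T).IsSymmetric :=
  fun x y => by simp [hT x y]

lemma map_reflection_of_map_eq_zero (hT : T.IsSymmetric) {d : E} (hd : T d = 0) (x : E) :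
    T ((ℝ ∙ d)ᗮ.reflection x) = (ℝ ∙ d)ᗮ.reflection (T x) := by
  have horth : T x ∈ (ℝ ∙ d)ᗮ := by
    rw [Submodule.mem_orthogonal_singleton_iff_inner_right, ← hT, hd, inner_zero_left]
  rw [Submodule.reflection_mem_subspace_eq_self horth, Submodule.reflection_orthogonal_apply,
    Submodule.reflection_singleton_apply]
  simp [hd]

lemma inner_map_self_eq_sum_repr {ι : Type*} [Fintype ι] (hT : T.IsSymmetric)
    (v : OrthonormalBasis ι ℝ E) {l : ι → ℝ} (hl : ∀ i, T (v i) = l i • v i) (x : E) :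
    ⟪T x, x⟫ = ∑ i, l i * v.repr x i ^ 2 := by
  rw [← v.sum_inner_mul_inner (T x) x]
  refine Finset.sum_congr rfl fun i _ => ?_
  rw [hT x (v i), hl, inner_smul_right, v.repr_apply_apply, real_inner_comm]
  ring

variable [FiniteDimensional ℝ E]

-- Reflecting along a vector of the kernel of `T` commutes with `T`, so it carries an eigenbasis to
-- an eigenbasis; the reflection chosen here moves a basis vector of the kernel to the direction of
-- `w`.
lemma exists_eigenbasis_of_map_eq_zero {n : ℕ} (hE : Module.finrank ℝ E = n) (hT : T.IsSymmetric)
    {w : E} (hw : w ≠ 0) (hTw : T w = 0) :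
    ∃ (v : OrthonormalBasis (Fin n) ℝ E) (l : Fin n → ℝ) (j : Fin n),
      (∀ i, T (v i) = l i • v i) ∧ l j = 0 ∧ w = ‖w‖ • v j := by
  set v := hT.eigenvectorBasis hE
  set l := hT.eigenvalues hE
  have hl (i : Fin n) : T (v i) = l i • v i := hT.apply_eigenvectorBasis hE i
  obtain ⟨j, hj⟩ : ∃ j, ⟪v j, w⟫ ≠ 0 := by
    by_contra! hcon
    exact hw (v.repr.map_eq_zero_iff.1 (by ext i; simpa [v.repr_apply_apply] using hcon i))
  have hlj : l j = 0 := by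
    have hinner : l j * ⟪v j, w⟫ = 0 := by
      rw [← real_inner_smul_left, ← hl, hT, hTw, inner_zero_right]
    exact (mul_eq_zero.1 hinner).resolve_right hj
  have hnorm : ‖v j‖ = ‖‖w‖⁻¹ • w‖ := by
    rw [v.orthonormal.1 j]
    exact (norm_smul_inv_norm (𝕜 := ℝ) hw).symm
  have hd : T (v j - ‖w‖⁻¹ • w) = 0 := by simp [hl, hlj, hTw]
  refine ⟨v.map (ℝ ∙ (v j - ‖w‖⁻¹ • w))ᗮ.reflection, l, j, fun i => ?_, hlj, ?_⟩
  · rw [OrthonormalBasis.map_apply, map_reflection_of_map_eq_zero hT hd, hl, map_smul]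
  · rw [OrthonormalBasis.map_apply, Submodule.reflection_sub hnorm, smul_smul,
      mul_inv_cancel₀ (norm_ne_zero_iff.2 hw), one_smul]

lemma exists_translate_eq_central_or_parabolic (hT : T.IsSymmetric) (b : E) (c : ℝ) :
    ∃ u, (∃ c', ∀ x, ⟪T (x + u), x + u⟫ + 2 * ⟪b, x + u⟫ + c = ⟪T x, x⟫ + c') ∨
      ∃ w ≠ 0, T w = 0 ∧ ∀ x, ⟪T (x + u), x + u⟫ + 2 * ⟪b, x + u⟫ + c = ⟪T x, x⟫ + 2 * ⟪w, x⟫ := by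
  obtain ⟨_, ⟨u, rfl⟩, w, hw, rfl⟩ := T.range.exists_add_mem_mem_orthogonal b
  rw [hT.orthogonal_range] at hw
  have hTw : T w = 0 := hw
  have hsquare (x y : E) (hy : T y = 0) :
      ⟪T (x + (-u + y)), x + (-u + y)⟫ + 2 * ⟪T u + w, x + (-u + y)⟫ + c =
        ⟪T x, x⟫ + 2 * ⟪w, x⟫ + (2 * ⟪w, y⟫ + (c - ⟪T u, u⟫ - 2 * ⟪w, u⟫)) := by
    have hxu : ⟪T x, u⟫ = ⟪T u, x⟫ := by rw [hT x u, real_inner_comm]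
    have hTy (z : E) : ⟪T z, y⟫ = 0 := by rw [hT z y, hy, inner_zero_right]
    simp only [map_add, map_neg, hy, inner_add_left, inner_add_right, inner_neg_left,
      inner_neg_right, inner_zero_left, hxu, hTy]
    ring
  rcases eq_or_ne w 0 with rfl | hw₀
  · exact ⟨-u, .inl ⟨c - ⟪T u, u⟫, fun x => by simpa using hsquare x 0 (map_zero T)⟩⟩
  · have hww : 2 * ⟪w, w⟫ ≠ 0 := mul_ne_zero two_ne_zero (inner_self_ne_zero.2 hw₀)
    set s := -(c - ⟪T u, u⟫ - 2 * ⟪w, u⟫) / (2 * ⟪w, w⟫)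
    have hs : 2 * ⟪w, s • w⟫ = -(c - ⟪T u, u⟫ - 2 * ⟪w, u⟫) := by
      rw [real_inner_smul_right, mul_left_comm, div_mul_cancel₀ _ hww]
    refine ⟨-u + s • w, .inr ⟨w, hw₀, hTw, fun x => ?_⟩⟩
    rw [hsquare x _ (by rw [map_smul, hTw, smul_zero]), hs]
    ring

end SymmetricOperator

section CanonicalForm

/-- `S` is given in the standard coordinates of `ℝⁿ` by one of the canonical equations (1)–(5), in
this order. Coordinates are indexed from `0`, so `⟨0, hn⟩` is the index of the first one. -/
def IsCanonicalQuadric {n : ℕ} (hn : 0 < n) (S : Set (En n)) : Prop :=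
  (∃ k : ℕ, 1 ≤ k ∧ k ≤ n ∧ ∃ a : Fin n → ℝ, (∀ i : Fin n, (i : ℕ) < k → 0 < a i) ∧
    S = {x : En n |
      ∑ i ∈ Finset.univ.filter (fun i : Fin n => (i : ℕ) < k), a i * x i ^ 2 = 1}) ∨
  (∃ k : ℕ, 2 ≤ k ∧ k ≤ n ∧ ∃ a : Fin n → ℝ, (∀ i : Fin n, (i : ℕ) < k → 0 < a i) ∧
    S = {x : En n |
      a ⟨0, hn⟩ * x ⟨0, hn⟩ ^ 2 -
        ∑ i ∈ Finset.univ.filter (fun i : Fin n => 1 ≤ (i : ℕ) ∧ (i : ℕ) < k),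
          a i * x i ^ 2 = 1}) ∨
  (S = {x : En n | x ⟨0, hn⟩ = 0}) ∨
  (∃ k : ℕ, 2 ≤ k ∧ k ≤ n ∧ ∃ a : Fin n → ℝ, (∀ i : Fin n, (i : ℕ) < k → 0 < a i) ∧
    S = {x : En n |
      a ⟨0, hn⟩ * x ⟨0, hn⟩ ^ 2 -
        ∑ i ∈ Finset.univ.filter (fun i : Fin n => 1 ≤ (i : ℕ) ∧ (i : ℕ) < k),
          a i * x i ^ 2 = 0}) ∨
  (∃ κ : Fin n, 1 ≤ (κ : ℕ) ∧ ∃ a : Fin n → ℝ, (∀ i : Fin n, (i : ℕ) < (κ : ℕ) → 0 < a i) ∧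
    S = {x : En n |
      ∑ i ∈ Finset.univ.filter (fun i : Fin n => (i : ℕ) < (κ : ℕ)), a i * x i ^ 2 = x κ})

lemma sum_filter_div_mul_sq {ι : Type*} [Fintype ι] (p : ι → Prop) [DecidablePred p] {l : ι → ℝ}
    (hl : ∀ i, ¬p i → l i = 0) (c : ℝ) (x : ι → ℝ) :
    ∑ i with p i, l i / c * x i ^ 2 = (∑ i, l i * x i ^ 2) / c := by
  rw [Finset.sum_filter_of_ne fun i _ hne => by_contra fun hi => hne (by simp [hl i hi]),
    Finset.sum_div]
  exact Finset.sum_congr rfl fun i _ => by ring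

variable {n : ℕ} (hn : 0 < n) {l : Fin n → ℝ} {c : ℝ}

lemma isCanonicalQuadric_of_nonneg {k : ℕ} (hk : 1 ≤ k) (hkn : k ≤ n)
    (hpos : ∀ i : Fin n, (i : ℕ) < k → 0 < l i) (hzero : ∀ i : Fin n, ¬(i : ℕ) < k → l i = 0)
    (hc : 0 < c) : IsCanonicalQuadric hn {x | ∑ i, l i * x i ^ 2 = c} := by
  refine .inl ⟨k, hk, hkn, fun i => l i / c, fun i hi => div_pos (hpos i hi) hc, ?_⟩
  ext x
  simp only [mem_ofPred_eq, sum_filter_div_mul_sq _ hzero, div_eq_one_iff_eq hc.ne']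

lemma sum_mul_sq_div_eq_sub {k : ℕ} (hpos : 0 < l ⟨0, hn⟩)
    (hneg : ∀ i : Fin n, 1 ≤ (i : ℕ) → (i : ℕ) < k → l i < 0)
    (hzero : ∀ i : Fin n, ¬(i : ℕ) < k → l i = 0) (c : ℝ) (x : Fin n → ℝ) :
    |l ⟨0, hn⟩| / c * x ⟨0, hn⟩ ^ 2 -
        ∑ i ∈ Finset.univ.filter (fun i : Fin n => 1 ≤ (i : ℕ) ∧ (i : ℕ) < k),
          |l i| / c * x i ^ 2 =
      (∑ i, l i * x i ^ 2) / c := by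
  have hrest :
      ∑ i ∈ Finset.univ.filter (fun i : Fin n => 1 ≤ (i : ℕ) ∧ (i : ℕ) < k), |l i| / c * x i ^ 2 =
      -((∑ i ∈ Finset.univ.erase ⟨0, hn⟩, l i * x i ^ 2) / c) := by
    rw [Finset.sum_div, ← Finset.sum_neg_distrib]
    refine Finset.sum_subset_zero_on_sdiff (fun i hi => ?_) (fun i hi => ?_) fun i hi => ?_
    · simp only [Finset.mem_filter_univ] at hi
      simp only [Finset.mem_erase, ne_eq, Fin.ext_iff, Finset.mem_univ, and_true]
      omega
    · simp only [Finset.mem_sdiff, Finset.mem_erase, ne_eq, Fin.ext_iff, Finset.mem_univ, and_true,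
        Finset.mem_filter_univ] at hi
      simp [hzero i (by omega)]
    · obtain ⟨hi₁, hik⟩ := (Finset.mem_filter_univ i).1 hi
      rw [abs_of_neg (hneg i hi₁ hik)]
      ring
  rw [hrest, ← Finset.add_sum_erase _ _ (Finset.mem_univ ⟨0, hn⟩), abs_of_pos hpos]
  ring

lemma isCanonicalQuadric_of_one_pos {k : ℕ} (hk : 1 ≤ k) (hkn : k ≤ n) (hpos : 0 < l ⟨0, hn⟩)
    (hneg : ∀ i : Fin n, 1 ≤ (i : ℕ) → (i : ℕ) < k → l i < 0)
    (hzero : ∀ i : Fin n, ¬(i : ℕ) < k → l i = 0) (hc : 0 ≤ c) :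
    IsCanonicalQuadric hn {x | ∑ i, l i * x i ^ 2 = c} := by
  have hsum := sum_mul_sq_div_eq_sub hn hpos hneg hzero
  have habs (i : Fin n) (hi : (i : ℕ) < k) : 0 < |l i| := by
    rcases Nat.eq_zero_or_pos (i : ℕ) with h₀ | h₁
    · rw [show i = ⟨0, hn⟩ from Fin.ext h₀]
      exact abs_pos_of_pos hpos
    · exact abs_pos.2 (hneg i h₁ hi).ne
  rcases hk.eq_or_lt with rfl | hk₂ <;> rcases hc.eq_or_lt with rfl | hc₀
  · refine .inr (.inr (.inl ?_))
    ext x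
    rw [mem_ofPred, mem_ofPred, Fintype.sum_eq_single ⟨0, hn⟩ fun i hi => ?_]
    · simp [hpos.ne']
    · rw [hzero i fun h => hi (Fin.ext (Nat.lt_one_iff.1 h)), zero_mul]
  · refine isCanonicalQuadric_of_nonneg hn le_rfl hkn (fun i hi => ?_) hzero hc₀
    rwa [show i = ⟨0, hn⟩ from Fin.ext (Nat.lt_one_iff.1 hi)]
  · refine .inr (.inr (.inr (.inl ⟨k, hk₂, hkn, fun i => |l i| / 1,
      fun i hi => div_pos (habs i hi) one_pos, ?_⟩)))
    ext x
    simp only [mem_ofPred_eq, hsum, div_eq_zero_iff, one_ne_zero, or_false]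
  · refine .inr (.inl ⟨k, hk₂, hkn, fun i => |l i| / c, fun i hi => div_pos (habs i hi) hc₀, ?_⟩)
    ext x
    simp only [mem_ofPred_eq, hsum, div_eq_one_iff_eq hc₀.ne']

lemma isCanonicalQuadric_of_paraboloid (κ : Fin n) (hpos : ∀ i < κ, 0 < l i)
    (hzero : ∀ i, κ ≤ i → l i = 0) {β : ℝ} (hβ : 0 < β) :
    IsCanonicalQuadric hn {x | ∑ i, l i * x i ^ 2 = β * x κ} := by
  rcases Nat.eq_zero_or_pos (κ : ℕ) with h₀ | h₁
  · obtain rfl : κ = ⟨0, hn⟩ := Fin.ext h₀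
    refine .inr (.inr (.inl ?_))
    ext x
    rw [mem_ofPred, mem_ofPred,
      Finset.sum_eq_zero fun i _ => by rw [hzero i (Nat.zero_le (i : ℕ)), zero_mul]]
    simp [hβ.ne']
  · refine .inr (.inr (.inr (.inr ⟨κ, h₁, fun i => l i / β, fun i hi => div_pos (hpos i hi) hβ,
      ?_⟩)))
    ext x
    simp only [mem_ofPred_eq, div_eq_iff hβ.ne', mul_comm β,
      sum_filter_div_mul_sq (fun i : Fin n => (i : ℕ) < κ) fun i hi => hzero i (not_lt.1 hi)]

end CanonicalForm

section Diagonalization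

variable {E : Type*} [NormedAddCommGroup E] [InnerProductSpace ℝ E] {n : ℕ} (hn : 0 < n)

/-- In suitable Cartesian coordinates of `E`, the set `S` has one of the five canonical forms. -/
def HasCanonicalForm (S : Set E) : Prop :=
  ∃ f : E ≃ᵃⁱ[ℝ] En n, IsCanonicalQuadric hn (f '' S)

variable {hn}

lemma HasCanonicalForm.of_image {S : Set E} (g : E ≃ᵃⁱ[ℝ] E)
    (h : HasCanonicalForm hn (g '' S)) : HasCanonicalForm hn S := by
  obtain ⟨f, hf⟩ := h
  refine ⟨g.trans f, ?_⟩
  rwa [image_image] at hf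

lemma hasCanonicalForm_preimage_repr (v : OrthonormalBasis (Fin n) ℝ E) {S : Set (En n)}
    (hS : IsCanonicalQuadric hn S) : HasCanonicalForm hn (v.repr ⁻¹' S) := by
  refine ⟨v.repr.toAffineIsometryEquiv, ?_⟩
  rwa [LinearIsometryEquiv.coe_toAffineIsometryEquiv, image_preimage_eq S v.repr.surjective]

open Classical in
lemma exists_perm_forall_lt_iff {p q : Fin n → Prop} (hpq : ∀ i, p i → q i) :
    ∃ (τ : Equiv.Perm (Fin n)) (k m : ℕ), m ≤ n ∧
      (∀ i : Fin n, (i : ℕ) < k ↔ p (τ i)) ∧ ∀ i : Fin n, (i : ℕ) < m ↔ q (τ i) := by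
  let key (i : Fin n) : ℕ := if p i then 0 else if q i then 1 else 2
  have hsorted : Monotone (key ∘ Tuple.sort key) := Tuple.monotone_sort key
  have hp (i : Fin n) : key i ≤ 0 ↔ p i := by
    simp only [key]
    split_ifs <;> simp_all
  have hq (i : Fin n) : key i ≤ 1 ↔ q i := by
    have := hpq i
    simp only [key]
    split_ifs <;> simp_all
  exact ⟨Tuple.sort key, _, _, (Finset.card_filter_le _ _).trans_eq (Finset.card_fin n),
    fun i => (Tuple.lt_card_le_iff_apply_le_of_monotone hsorted).trans (hp _),
    fun i => (Tuple.lt_card_le_iff_apply_le_of_monotone hsorted).trans (hq _)⟩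

variable {T : E →ₗ[ℝ] E} {l : Fin n → ℝ} {c : ℝ}

lemma hasCanonicalForm_of_eigenbasis (hT : T.IsSymmetric) (v : OrthonormalBasis (Fin n) ℝ E)
    (hl : ∀ i, T (v i) = l i • v i) (r : En n → ℝ)
    (h : IsCanonicalQuadric hn {y | ∑ i, l i * y i ^ 2 = r y}) :
    HasCanonicalForm hn {x | ⟪T x, x⟫ = r (v.repr x)} := by
  simp only [inner_map_self_eq_sum_repr hT v hl]
  exact hasCanonicalForm_preimage_repr v h

lemma map_reindex_eigenbasis (v : OrthonormalBasis (Fin n) ℝ E) (hl : ∀ i, T (v i) = l i • v i)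
    (τ : Equiv.Perm (Fin n)) (i : Fin n) :
    T (v.reindex τ.symm i) = l (τ i) • v.reindex τ.symm i := by
  simp [hl]

lemma hasCanonicalForm_of_eigenvalues_nonneg (hT : T.IsSymmetric)
    (v : OrthonormalBasis (Fin n) ℝ E) (hl : ∀ i, T (v i) = l i • v i) (hnonneg : ∀ i, 0 ≤ l i)
    (hpos : ∃ i, 0 < l i) (hc : 0 < c) : HasCanonicalForm hn {x | ⟪T x, x⟫ = c} := by
  obtain ⟨i₀, hi₀⟩ := hpos
  obtain ⟨τ, -, k, hkn, -, hk⟩ := exists_perm_forall_lt_iff fun i (hi : 0 < l i) => hi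
  have hk₁ : 1 ≤ k := Nat.one_le_of_lt ((hk (τ.symm i₀)).2 (by simpa using hi₀))
  refine hasCanonicalForm_of_eigenbasis hT _ (map_reindex_eigenbasis v hl τ) (fun _ => c) ?_
  exact isCanonicalQuadric_of_nonneg hn hk₁ hkn (fun i hi => (hk i).1 hi)
    (fun i hi => (hnonneg _).antisymm' (not_lt.1 (mt (hk i).2 hi))) hc

lemma hasCanonicalForm_of_one_eigenvalue_pos (hT : T.IsSymmetric)
    (v : OrthonormalBasis (Fin n) ℝ E) (hl : ∀ i, T (v i) = l i • v i) {i₀ : Fin n}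
    (hpos : 0 < l i₀) (hnonpos : ∀ i ≠ i₀, l i ≤ 0) (hc : 0 ≤ c) :
    HasCanonicalForm hn {x | ⟪T x, x⟫ = c} := by
  obtain ⟨τ, k, m, hmn, hk, hm⟩ := exists_perm_forall_lt_iff
    (p := (· = i₀)) (q := (l · ≠ 0)) fun i hi => hi ▸ hpos.ne'
  have hk₀ : 0 < k := Nat.zero_lt_of_lt ((hk (τ.symm i₀)).2 (by simp))
  have hτ : τ ⟨0, hn⟩ = i₀ := (hk ⟨0, hn⟩).1 hk₀
  have hm₁ : 1 ≤ m := (hm ⟨0, hn⟩).2 (hτ ▸ hpos.ne')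
  refine hasCanonicalForm_of_eigenbasis hT _ (map_reindex_eigenbasis v hl τ) (fun _ => c) ?_
  refine isCanonicalQuadric_of_one_pos hn hm₁ hmn (hτ ▸ hpos) (fun i hi him => ?_)
    (fun i hi => not_not.1 (mt (hm i).2 hi)) hc
  refine (hnonpos _ fun h => ?_).lt_of_ne ((hm i).1 him)
  rw [← hτ, τ.apply_eq_iff_eq] at h
  simp [h] at hi

lemma hasCanonicalForm_of_paraboloid (hT : T.IsSymmetric) (v : OrthonormalBasis (Fin n) ℝ E)
    (hl : ∀ i, T (v i) = l i • v i) (hnonneg : ∀ i, 0 ≤ l i) {j : Fin n} (hj : l j = 0) {β : ℝ}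
    (hβ : 0 < β) : HasCanonicalForm hn {x | ⟪T x, x⟫ = β * ⟪v j, x⟫} := by
  obtain ⟨τ, k, m, -, hk, hm⟩ := exists_perm_forall_lt_iff
    (p := (0 < l ·)) (q := fun i => 0 < l i ∨ i = j) fun i => .inl
  set κ := τ.symm j
  have hκ : τ κ = j := τ.apply_symm_apply j
  have hkκ : k ≤ κ := not_lt.1 fun h => by simpa [hκ, hj] using (hk κ).1 h
  have hκm : κ < m := (hm κ).2 (.inr hκ)
  have hsorted := isCanonicalQuadric_of_paraboloid hn (l := l ∘ τ) κ (fun i hi => ?_)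
    (fun i hi => ?_) hβ
  · simpa [OrthonormalBasis.repr_apply_apply, hκ] using
      hasCanonicalForm_of_eigenbasis hT _ (map_reindex_eigenbasis v hl τ) (fun y => β * y κ) hsorted
  · exact ((hm i).1 (lt_trans hi hκm)).resolve_right fun h =>
      hi.ne (τ.injective (h.trans hκ.symm))
  · exact (hnonneg _).antisymm' (not_lt.1 (mt (hk i).2 (not_lt.2 (hkκ.trans hi))))

end Diagonalization

section Classification

variable {E : Type*} [NormedAddCommGroup E] [InnerProductSpace ℝ E] {T : E →ₗ[ℝ] E}

section Eigenbasis

variable {n : ℕ} {l : Fin n → ℝ}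

lemma operatorForm_eigenvector (v : OrthonormalBasis (Fin n) ℝ E) (hl : ∀ i, T (v i) = l i • v i)
    (i : Fin n) : operatorForm T (v i) = l i := by
  simp [operatorForm_apply, hl, real_inner_smul_left]

lemma polar_operatorForm_eigenvector (hT : T.IsSymmetric) (v : OrthonormalBasis (Fin n) ℝ E)
    (hl : ∀ i, T (v i) = l i • v i) {i j : Fin n} (hij : i ≠ j) :
    QuadraticMap.polar (operatorForm T) (v i) (v j) = 0 := by
  rw [polar_operatorForm hT, hl, real_inner_smul_left, v.orthonormal.2 hij, mul_zero, mul_zero]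

lemma exists_eigenvalue_pos (hT : T.IsSymmetric) (v : OrthonormalBasis (Fin n) ℝ E)
    (hl : ∀ i, T (v i) = l i • v i) {x : E} (hx : 0 < ⟪T x, x⟫) : ∃ i, 0 < l i := by
  rw [inner_map_self_eq_sum_repr hT v hl] at hx
  by_contra! hnonpos
  exact hx.not_ge <| Finset.sum_nonpos fun i _ =>
    mul_nonpos_of_nonpos_of_nonneg (hnonpos i) (sq_nonneg _)

variable (hn : 0 < n) {c : ℝ}

lemma hasCanonicalForm_of_hasConvexComponent_pos_of_nonpos (hT : T.IsSymmetric)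
    (v : OrthonormalBasis (Fin n) ℝ E) (hl : ∀ i, T (v i) = l i • v i) (hc : c ≤ 0)
    (h : HasConvexComponent {x | 0 < ⟪T x, x⟫ + c}) :
    HasCanonicalForm hn {x | ⟪T x, x⟫ + c = 0} := by
  obtain ⟨x, hx : 0 < ⟪T x, x⟫ + c⟩ := h.nonempty
  obtain ⟨i₀, hi₀⟩ := exists_eigenvalue_pos hT v hl (by linarith : 0 < ⟪T x, x⟫)
  have hnonpos (i : Fin n) (hi : i ≠ i₀) : l i ≤ 0 := by
    rw [← operatorForm_eigenvector v hl] at hi₀ ⊢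
    exact nonpos_of_polar_eq_zero_of_pos hc h (polar_operatorForm_eigenvector hT v hl hi.symm) hi₀
  simpa only [add_eq_zero_iff_eq_neg] using
    hasCanonicalForm_of_one_eigenvalue_pos hT v hl hi₀ hnonpos (neg_nonneg.2 hc)

lemma hasCanonicalForm_of_hasConvexComponent_pos_of_pos (hT : T.IsSymmetric)
    (v : OrthonormalBasis (Fin n) ℝ E) (hl : ∀ i, T (v i) = l i • v i) (hc : 0 < c)
    (hne : {x | ⟪T x, x⟫ + c = 0}.Nonempty) (h : HasConvexComponent {x | 0 < ⟪T x, x⟫ + c}) :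
    HasCanonicalForm hn {x | ⟪T x, x⟫ + c = 0} := by
  have hnegl (i : Fin n) : (-T) (v i) = (-l i) • v i := by simp [hl]
  obtain ⟨x, hx : ⟪T x, x⟫ + c = 0⟩ := hne
  have hnegx : 0 < ⟪(-T) x, x⟫ := by simpa [eq_neg_of_add_eq_zero_left hx] using hc
  obtain ⟨i₀, hi₀⟩ := exists_eigenvalue_pos (isSymmetric_neg hT) v hnegl hnegx
  have hnonneg (i : Fin n) : 0 ≤ -l i := by
    rcases eq_or_ne i i₀ with rfl | hi
    · exact hi₀.le
    · rw [neg_pos, ← operatorForm_eigenvector v hl] at hi₀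
      rw [neg_nonneg, ← operatorForm_eigenvector v hl]
      exact nonpos_of_polar_eq_zero_of_neg hc h
        (polar_operatorForm_eigenvector hT v hl hi.symm) hi₀
  simpa [neg_eq_iff_add_eq_zero] using
    hasCanonicalForm_of_eigenvalues_nonneg (isSymmetric_neg hT) v hnegl hnonneg ⟨i₀, hi₀⟩ hc

end Eigenbasis

variable [FiniteDimensional ℝ E]

lemma continuous_operatorForm (T : E →ₗ[ℝ] E) : Continuous (operatorForm T) :=
  T.continuous_of_finiteDimensional.inner continuous_id

variable {n : ℕ} (hn : 0 < n)

lemma hasCanonicalForm_of_hasConvexComponent_central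
    (hE : Module.finrank ℝ E = n) (hT : T.IsSymmetric) {c : ℝ}
    (hne : {x | ⟪T x, x⟫ + c = 0}.Nonempty) (h : HasConvexComponent {x | ⟪T x, x⟫ + c = 0}ᶜ) :
    HasCanonicalForm hn {x | ⟪T x, x⟫ + c = 0} := by
  have hside {T : E →ₗ[ℝ] E} {c : ℝ} (hT : T.IsSymmetric)
      (hne : {x | ⟪T x, x⟫ + c = 0}.Nonempty) (h : HasConvexComponent {x | 0 < ⟪T x, x⟫ + c}) :
      HasCanonicalForm hn {x | ⟪T x, x⟫ + c = 0} := by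
    have hl := hT.apply_eigenvectorBasis hE
    rcases le_or_gt c 0 with hc | hc
    · exact hasCanonicalForm_of_hasConvexComponent_pos_of_nonpos hn hT _ hl hc h
    · exact hasCanonicalForm_of_hasConvexComponent_pos_of_pos hn hT _ hl hc hne h
  have hcont : Continuous fun x => ⟪T x, x⟫ + c :=
    (continuous_operatorForm T).add continuous_const
  rcases (hasConvexComponent_compl_setOf_eq_zero_iff hcont).1 h with hpos | hneg
  · exact hside hT hne hpos
  · have hflip (x : E) : ⟪(-T) x, x⟫ + -c = -(⟪T x, x⟫ + c) := by
      simp [add_comm]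
    simpa only [hflip, neg_eq_zero] using hside (c := -c) (isSymmetric_neg hT)
      (by simpa only [hflip, neg_eq_zero] using hne) (by simpa only [hflip, neg_pos] using hneg)

lemma hasCanonicalForm_of_hasConvexComponent_pos_parabolic
    (hE : Module.finrank ℝ E = n) (hT : T.IsSymmetric) {w : E}
    (hw : w ≠ 0) (hTw : T w = 0) (h : HasConvexComponent {x | 0 < ⟪T x, x⟫ + 2 * ⟪w, x⟫}) :
    HasCanonicalForm hn {x | ⟪T x, x⟫ + 2 * ⟪w, x⟫ = 0} := by
  obtain ⟨v, l, j, hl, hlj, hwj⟩ := exists_eigenbasis_of_map_eq_zero hE hT hw hTw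
  have hpolar (x : E) :
      QuadraticMap.polar (operatorForm T) x ((2 * ⟪w, w⟫)⁻¹ • w) = 0 := by
    simp [polar_operatorForm hT, hT x, hTw]
  have hnonneg (i : Fin n) : 0 ≤ -l i := by
    rw [neg_nonneg, ← operatorForm_eigenvector v hl]
    refine nonpos_of_forall_polar_eq_zero (continuous_operatorForm T) ((2 : ℝ) • innerSL ℝ w)
      hpolar ?_ (by simpa [operatorForm_apply] using h) _
    have hww : 2 * ⟪w, w⟫ ≠ 0 := mul_ne_zero two_ne_zero (inner_self_ne_zero.2 hw)
    rw [map_smul, smul_eq_mul, smul_apply, innerSL_apply_apply, smul_eq_mul,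
      inv_mul_cancel₀ hww]
  have hset : {x | ⟪T x, x⟫ + 2 * ⟪w, x⟫ = 0} = {x | ⟪(-T) x, x⟫ = 2 * ‖w‖ * ⟪v j, x⟫} := by
    ext x
    have hwx : ⟪w, x⟫ = ‖w‖ * ⟪v j, x⟫ := by rw [← real_inner_smul_left, ← hwj]
    rw [mem_ofPred, mem_ofPred, hwx, LinearMap.neg_apply, inner_neg_left, neg_eq_iff_add_eq_zero,
      mul_assoc]
  rw [hset]
  exact hasCanonicalForm_of_paraboloid (isSymmetric_neg hT) v (l := fun i => -l i)
    (fun i => by simp [hl]) hnonneg (by rw [hlj, neg_zero])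
    (mul_pos two_pos (norm_pos_iff.2 hw))

lemma hasCanonicalForm_of_hasConvexComponent_parabolic (hE : Module.finrank ℝ E = n)
    (hT : T.IsSymmetric) {w : E} (hw : w ≠ 0) (hTw : T w = 0)
    (h : HasConvexComponent {x | ⟪T x, x⟫ + 2 * ⟪w, x⟫ = 0}ᶜ) :
    HasCanonicalForm hn {x | ⟪T x, x⟫ + 2 * ⟪w, x⟫ = 0} := by
  have hcont : Continuous fun x => ⟪T x, x⟫ + 2 * ⟪w, x⟫ :=
    (continuous_operatorForm T).add (by fun_prop)
  rcases (hasConvexComponent_compl_setOf_eq_zero_iff hcont).1 h with hpos | hneg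
  · exact hasCanonicalForm_of_hasConvexComponent_pos_parabolic hn hE hT hw hTw hpos
  · have hflip (x : E) : ⟪(-T) x, x⟫ + 2 * ⟪-w, x⟫ = -(⟪T x, x⟫ + 2 * ⟪w, x⟫) := by
      simp [add_comm]
    simpa only [hflip, neg_eq_zero] using
      hasCanonicalForm_of_hasConvexComponent_pos_parabolic hn hE (isSymmetric_neg hT)
        (neg_ne_zero.2 hw) (by simp [hTw]) (by simpa only [hflip, neg_pos] using hneg)

lemma hasCanonicalForm_of_hasConvexComponent (hE : Module.finrank ℝ E = n) (hT : T.IsSymmetric)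
    {b : E} {c : ℝ} (hne : {x | ⟪T x, x⟫ + 2 * ⟪b, x⟫ + c = 0}.Nonempty)
    (h : HasConvexComponent {x | ⟪T x, x⟫ + 2 * ⟪b, x⟫ + c = 0}ᶜ) :
    HasCanonicalForm hn {x | ⟪T x, x⟫ + 2 * ⟪b, x⟫ + c = 0} := by
  obtain ⟨u, hu⟩ := exists_translate_eq_central_or_parabolic hT b c
  set Q := {x | ⟪T x, x⟫ + 2 * ⟪b, x⟫ + c = 0}
  let g : E ≃ᵃⁱ[ℝ] E := (AffineIsometryEquiv.vaddConst ℝ u).symm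
  have hgQ : g '' Q = {x | ⟪T (x + u), x + u⟫ + 2 * ⟪b, x + u⟫ + c = 0} :=
    g.toEquiv.image_eq_preimage_symm Q
  have hgne : (g '' Q).Nonempty := hne.image g
  have hg : HasConvexComponent (g '' Q)ᶜ := image_compl_eq g.bijective ▸ h.image g
  refine HasCanonicalForm.of_image g ?_
  rw [hgQ] at hgne hg ⊢
  rcases hu with ⟨c', hcentral⟩ | ⟨w, hw, hTw, hparabolic⟩
  · simp only [hcentral] at hgne hg ⊢
    exact hasCanonicalForm_of_hasConvexComponent_central hn hE hT hgne hg
  · simp only [hparabolic] at hg ⊢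
    exact hasCanonicalForm_of_hasConvexComponent_parabolic hn hE hT hw hTw hg

end Classification

lemma exists_isSymmetric_of_isQuadricSurface {n : ℕ} {Q : Set (En n)} (hQ : IsQuadricSurface Q) :
    ∃ (T : En n →ₗ[ℝ] En n) (b : En n) (c : ℝ), T.IsSymmetric ∧
      Q = {x | ⟪T x, x⟫ + 2 * ⟪b, x⟫ + c = 0} := by
  obtain ⟨a, b, c, ha, -, rfl⟩ := hQ
  refine ⟨Matrix.toEuclideanLin a, WithLp.toLp 2 b, c, ?_, ?_⟩
  · rw [Matrix.isSymmetric_toEuclideanLin_iff, Matrix.IsHermitian,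
      Matrix.conjTranspose_eq_transpose_of_trivial]
    exact ha
  · ext x
    simp only [mem_ofPred_eq, Matrix.toLpLin_apply, PiLp.inner_apply, Matrix.mulVec, dotProduct,
      RCLike.inner_apply, conj_trivial, Finset.mul_sum, mul_comm, mul_left_comm, mul_assoc]

section ConvexSides

variable {E : Type*} [AddCommGroup E] [Module ℝ E] [TopologicalSpace E] [IsTopologicalAddGroup E]
  [ContinuousSMul ℝ E] {q : QuadraticForm ℝ E}

lemma hasConvexComponent_compl_setOf_eq_affine (hq : ∀ x, 0 ≤ q x) (hcont : Continuous q)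
    (L : E →L[ℝ] ℝ) {c : ℝ} {w : E} (hw : q w < L w + c) :
    HasConvexComponent {x | q x = L x + c}ᶜ := by
  have hconv : Convex ℝ {x | q x - (L x + c) < 0} := by
    have haff : ConcaveOn ℝ univ fun x => L x + c :=
      (L.toLinearMap.concaveOn convex_univ).add (concaveOn_const c convex_univ)
    simpa using ((convexOn_of_quadraticForm_nonneg hq).sub haff).convex_lt 0
  have hside := hasConvexComponent_of_convex hconv ⟨w, sub_neg.2 hw⟩
  simpa only [sub_eq_zero] using
    (hasConvexComponent_compl_setOf_eq_zero_iff (f := fun x => q x - (L x + c))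
      (by fun_prop)).2 (.inr hside)

lemma hasConvexComponent_compl_setOf_sq_sub_eq (hq : ∀ x, 0 ≤ q x) (hcont : Continuous q)
    (L : E →L[ℝ] ℝ) {c : ℝ} (hc : 0 ≤ c) {w : E} (hLw : 0 < L w) (hw : q w + c < L w ^ 2) :
    HasConvexComponent {x | L x ^ 2 - q x = c}ᶜ := by
  have hsheets : {x | 0 < L x ^ 2 - q x - c} =
      {x | 0 < L x ∧ q x + c < L x ^ 2} ∪ {x | L x < 0 ∧ q x + c < L x ^ 2} := by
    ext x
    have hsign (h : q x + c < L x ^ 2) : 0 < L x ∨ L x < 0 :=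
      (sq_pos_iff.1 ((add_nonneg (hq x) hc).trans_lt h)).lt_or_gt.symm
    simp only [mem_ofPred_eq, mem_union, sub_sub, sub_pos]
    tauto
  have hopen : IsOpen {x | q x + c < L x ^ 2} := isOpen_lt (by fun_prop) (by fun_prop)
  have hside : HasConvexComponent {x | 0 < L x ^ 2 - q x - c} := by
    rw [hsheets, hasConvexComponent_union_iff]
    · exact .inl (hasConvexComponent_of_convex
        (convex_setOf_pos_and_add_lt_sq hq L.toLinearMap hc) ⟨w, hLw, hw⟩)
    · exact (isOpen_lt continuous_const L.continuous).inter hopen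
    · exact (isOpen_lt L.continuous continuous_const).inter hopen
    · exact disjoint_left.2 fun x hpos hneg => lt_asymm hpos.1 hneg.1
  simpa only [sub_eq_zero] using
    (hasConvexComponent_compl_setOf_eq_zero_iff (f := fun x => L x ^ 2 - q x - c)
      (by fun_prop)).2 (.inl hside)

end ConvexSides

section Coordinates

variable {ι : Type*}

/-- The quadratic form `x ↦ ∑ i ∈ s, a i * x i ^ 2` in standard coordinates. -/
def diagonalForm (s : Finset ι) (a : ι → ℝ) : QuadraticForm ℝ (EuclideanSpace ℝ ι) :=
  ∑ i ∈ s, a i • QuadraticMap.sq.comp (EuclideanSpace.proj (𝕜 := ℝ) i).toLinearMap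

variable {s : Finset ι} {a : ι → ℝ}

lemma diagonalForm_apply (x : EuclideanSpace ℝ ι) :
    diagonalForm s a x = ∑ i ∈ s, a i * x i ^ 2 := by
  simp [diagonalForm, pow_two]

lemma diagonalForm_nonneg (ha : ∀ i ∈ s, 0 ≤ a i) (x : EuclideanSpace ℝ ι) :
    0 ≤ diagonalForm s a x := by
  rw [diagonalForm_apply]
  exact Finset.sum_nonneg fun i hi => mul_nonneg (ha i hi) (sq_nonneg _)

lemma continuous_diagonalForm : Continuous (diagonalForm s a) := by
  simp only [funext diagonalForm_apply]
  fun_prop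

lemma diagonalForm_single_of_notMem [DecidableEq ι] {i : ι} (hi : i ∉ s) (t : ℝ) :
    diagonalForm s a (EuclideanSpace.single i t) = 0 := by
  rw [diagonalForm_apply]
  refine Finset.sum_eq_zero fun j hj => ?_
  simp [ne_of_mem_of_not_mem hj hi]

variable [Finite ι]

lemma hasConvexComponent_compl_ellipsoid (ha : ∀ i ∈ s, 0 ≤ a i) :
    HasConvexComponent {x : EuclideanSpace ℝ ι | ∑ i ∈ s, a i * x i ^ 2 = 1}ᶜ := by
  cases nonempty_fintype ι
  simpa [diagonalForm_apply] using hasConvexComponent_compl_setOf_eq_affine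
    (diagonalForm_nonneg ha) continuous_diagonalForm 0 (c := 1) (w := 0) (by simp)

lemma hasConvexComponent_compl_paraboloid (ha : ∀ i ∈ s, 0 ≤ a i) {j : ι} (hj : j ∉ s) :
    HasConvexComponent {x : EuclideanSpace ℝ ι | ∑ i ∈ s, a i * x i ^ 2 = x j}ᶜ := by
  cases nonempty_fintype ι
  classical
  simpa [diagonalForm_apply] using hasConvexComponent_compl_setOf_eq_affine
    (diagonalForm_nonneg ha) continuous_diagonalForm (EuclideanSpace.proj j) (c := 0)
    (w := EuclideanSpace.single j 1) (by simp [diagonalForm_single_of_notMem hj])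

lemma hasConvexComponent_compl_hyperboloid (ha : ∀ i ∈ s, 0 ≤ a i) {j : ι} (hj : j ∉ s)
    (haj : 0 < a j) {c : ℝ} (hc : 0 ≤ c) :
    HasConvexComponent
      {x : EuclideanSpace ℝ ι | a j * x j ^ 2 - ∑ i ∈ s, a i * x i ^ 2 = c}ᶜ := by
  cases nonempty_fintype ι
  classical
  have hsqrt : 0 < √(a j) := Real.sqrt_pos.2 haj
  let L : EuclideanSpace ℝ ι →L[ℝ] ℝ := √(a j) • EuclideanSpace.proj j
  have hL : L (EuclideanSpace.single j ((c + 1) / √(a j))) = c + 1 := by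
    simp [L, mul_div_cancel₀, hsqrt.ne']
  have hLsq (x : EuclideanSpace ℝ ι) : L x ^ 2 = a j * x j ^ 2 := by
    simp [L, mul_pow, Real.sq_sqrt haj.le]
  simpa only [hLsq, diagonalForm_apply] using hasConvexComponent_compl_setOf_sq_sub_eq
    (diagonalForm_nonneg ha) continuous_diagonalForm L hc (by rw [hL]; positivity)
    (by rw [hL, diagonalForm_single_of_notMem hj]; nlinarith)

lemma hasConvexComponent_compl_of_isCanonicalQuadric {n : ℕ} (hn : 0 < n) {S : Set (En n)}
    (hS : IsCanonicalQuadric hn S) : HasConvexComponent Sᶜ := by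
  rcases hS with ⟨k, -, -, a, ha, rfl⟩ | ⟨k, hk, -, a, ha, rfl⟩ | rfl |
    ⟨k, hk, -, a, ha, rfl⟩ | ⟨κ, -, a, ha, rfl⟩
  · exact hasConvexComponent_compl_ellipsoid fun i hi => (ha i (by simpa using hi)).le
  · exact hasConvexComponent_compl_hyperboloid (fun i hi => (ha i (by simp_all)).le) (by simp)
      (ha _ (Nat.zero_lt_of_lt hk)) zero_le_one
  · simpa [eq_comm] using hasConvexComponent_compl_paraboloid (s := ∅) (a := (0 : Fin n → ℝ))
      (by simp) (Finset.notMem_empty ⟨0, hn⟩)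
  · exact hasConvexComponent_compl_hyperboloid (fun i hi => (ha i (by simp_all)).le) (by simp)
      (ha _ (Nat.zero_lt_of_lt hk)) le_rfl
  · exact hasConvexComponent_compl_paraboloid (fun i hi => (ha i (by simpa using hi)).le)
      (by simp)

end Coordinates

/-- the complement of a real quadric surface Q ⊆ ℝⁿ (n ≥ 2) has a convex
connected component if and only if, in suitable Cartesian coordinates (i.e. after an
affine isometry of ℝⁿ), Q takes one of the five canonical forms. -/
theorem quadric_complement_has_convex_component_iff
    {n : ℕ} (hn : 2 ≤ n) (Q : Set (En n)) (hQ : IsRealQuadricSurface Q) :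
    (∃ U ∈ componentsIn Qᶜ, Convex ℝ U) ↔
      ∃ f : En n ≃ᵃⁱ[ℝ] En n,
        -- (1) a₁ξ₁² + ⋯ + a_kξ_k² = 1,  1 ≤ k ≤ n
        (∃ k : ℕ, 1 ≤ k ∧ k ≤ n ∧ ∃ a : Fin n → ℝ, (∀ i : Fin n, (i : ℕ) < k → 0 < a i) ∧
          f '' Q = {x : En n |
            ∑ i ∈ Finset.univ.filter (fun i : Fin n => (i : ℕ) < k), a i * x i ^ 2 = 1}) ∨
        -- (2) a₁ξ₁² − a₂ξ₂² − ⋯ − a_kξ_k² = 1,  2 ≤ k ≤ n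
        (∃ k : ℕ, 2 ≤ k ∧ k ≤ n ∧ ∃ a : Fin n → ℝ, (∀ i : Fin n, (i : ℕ) < k → 0 < a i) ∧
          f '' Q = {x : En n |
            a ⟨0, by omega⟩ * x ⟨0, by omega⟩ ^ 2 -
              ∑ i ∈ Finset.univ.filter (fun i : Fin n => 1 ≤ (i : ℕ) ∧ (i : ℕ) < k),
                a i * x i ^ 2 = 1}) ∨
        -- (3) ξ₁ = 0
        (f '' Q = {x : En n | x ⟨0, by omega⟩ = 0}) ∨
        -- (4) a₁ξ₁² − a₂ξ₂² − ⋯ − a_kξ_k² = 0,  2 ≤ k ≤ n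
        (∃ k : ℕ, 2 ≤ k ∧ k ≤ n ∧ ∃ a : Fin n → ℝ, (∀ i : Fin n, (i : ℕ) < k → 0 < a i) ∧
          f '' Q = {x : En n |
            a ⟨0, by omega⟩ * x ⟨0, by omega⟩ ^ 2 -
              ∑ i ∈ Finset.univ.filter (fun i : Fin n => 1 ≤ (i : ℕ) ∧ (i : ℕ) < k),
                a i * x i ^ 2 = 0}) ∨
        -- (5) a₁ξ₁² + ⋯ + a_{k−1}ξ_{k−1}² = ξ_k,  2 ≤ k ≤ n  (here κ : Fin n is the index
        -- of ξ_k, so κ = k − 1 ≥ 1)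
        (∃ κ : Fin n, 1 ≤ (κ : ℕ) ∧ ∃ a : Fin n → ℝ, (∀ i : Fin n, (i : ℕ) < (κ : ℕ) → 0 < a i) ∧
          f '' Q = {x : En n |
            ∑ i ∈ Finset.univ.filter (fun i : Fin n => (i : ℕ) < (κ : ℕ)), a i * x i ^ 2 = x κ}) := by
  change HasConvexComponent Qᶜ ↔ HasCanonicalForm (by omega : 0 < n) Q
  obtain ⟨hquadric, hne⟩ := hQ
  obtain ⟨T, b, c, hT, rfl⟩ := exists_isSymmetric_of_isQuadricSurface hquadric
  constructor
  · exact hasCanonicalForm_of_hasConvexComponent _ finrank_euclideanSpace_fin hT hne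
  · rintro ⟨f, hf⟩
    have h := (hasConvexComponent_compl_of_isCanonicalQuadric _ hf).image f.symm
    simpa [← image_compl_eq f.bijective, image_image] using h
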